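/- arXiv:1701.09017 — 2 statements merged into one kernel-verified Lean document; each statement's English description precedes it below -/
import Mathlib

section
/- The group ⟨s, t | s t s t s = t s t s t, s^3 = 1, t^3 = 1⟩ is a finite group of order 360. -/
/-- Relators of the complex reflection group `G₂₀ = ⟨s, t | s t s t s = t s t s t, s³ = t³ = 1⟩`,
with `true ↦ s`, `false ↦ t`. -/
def relG20 : Set (FreeGroup Bool) :=
  {FreeGroup.of true * FreeGroup.of false * FreeGroup.of true * FreeGroup.of false *
      FreeGroup.of true *
    (FreeGroup.of false * FreeGroup.of true * FreeGroup.of false * FreeGroup.of true *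
      FreeGroup.of false)⁻¹,
   FreeGroup.of true ^ 3, FreeGroup.of false ^ 3}

/-- The group `G₂₀`. -/
abbrev G20 := PresentedGroup relG20

/-- The generator `s` of `G₂₀`. -/
def gs : G20 := PresentedGroup.of true

/-- The generator `t` of `G₂₀`. -/
def gt : G20 := PresentedGroup.of false

/-! The proof: a Knuth-Bendix completion of the presentation is replayed (each rule comes from a
critical pair of earlier rules), which gives 360 normal forms, closed under left multiplication
by the generators; they are separated by a two-dimensional representation over `ZMod 19`. -/

namespace G20Proof

/-- Words in the generators. -/
abbrev W := List Bool

/-- Rewriting rules. -/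
abbrev Rules := List (W × W)

/-- Decode a word from the binary digits of a number with a leading one. -/
def dec : ℕ → ℕ → W
  | 0, _ => []
  | n + 1, m => bif Nat.ble m 1 then [] else (Nat.beq (m % 2) 1) :: dec n (m / 2)

/-- Equality test of words. -/
def eqW : W → W → Bool
  | [], [] => true
  | a :: l, b :: w => bif Bool.xor a b then false else eqW l w
  | [], _ :: _ => false
  | _ :: _, [] => false

/-- Remove a prefix. (Written with recursors, which the kernel evaluates faster.) -/
noncomputable def strip (l : W) : W → Option W :=
  List.rec (motive := fun _ => W → Option W) (fun w => some w)
    (fun a _ ih w => List.casesOn (motive := fun _ => Option W) w none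
      fun b w' => Bool.rec (motive := fun _ => Option W)
        (Bool.rec (motive := fun _ => Option W) (ih w') none b)
        (Bool.rec (motive := fun _ => Option W) none (ih w') b) a) l

/-- Find the first rule which applies at the head of a word. -/
noncomputable def findR (R : Rules) (w : W) : Option (W × W) :=
  List.rec (motive := fun _ => Option (W × W)) none
    (fun p _ ih => Option.rec (motive := fun _ => Option (W × W)) ih
      (fun y => some (p.2, y)) (strip p.1 w)) R

theorem findR_cons (p : W × W) (R : Rules) (w : W) :
    findR (p :: R) w = match strip p.1 w with
      | some y => some (p.2, y)
      | none => findR R w := by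
  change Option.rec (motive := fun _ => Option (W × W)) (findR R w)
    (fun y => some (p.2, y)) (strip p.1 w) = _
  cases strip p.1 w <;> rfl

/-- Put a letter in front of a word and reduce. -/
noncomputable def push : ℕ → Rules → Bool → W → W
  | 0, _, g, w => g :: w
  | n + 1, R, g, w => match findR R (g :: w) with
    | none => g :: w
    | some p => p.1.foldr (push n R) p.2

/-- Reduce a word. -/
noncomputable def norm (R : Rules) (w : W) : W := w.foldr (push 30 R) []

/-- Check that a new rule comes from a critical pair. -/
noncomputable def okRule (R : Rules) (c : ℕ × ℕ × ℕ × ℕ × ℕ) : Bool :=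
  match R[c.1]?, R[c.2.1]? with
  | some x, some y =>
    let k := c.2.2.1
    let p := x.1.take (x.1.length - k)
    let q := y.1.drop k
    let u := norm R (x.2 ++ q)
    let v := norm R (p ++ y.2)
    let a := dec 30 c.2.2.2.1
    let b := dec 30 c.2.2.2.2
    eqW (p ++ y.1) (x.1 ++ q) && ((eqW u a && eqW v b) || (eqW u b && eqW v a))
  | _, _ => false

/-- The rule of a certificate. -/
def ruleOf (c : ℕ × ℕ × ℕ × ℕ × ℕ) : W × W := (dec 30 c.2.2.2.1, dec 30 c.2.2.2.2)

/-- Check all certificates in turn. -/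
noncomputable def okAll : Rules → List (ℕ × ℕ × ℕ × ℕ × ℕ) → Bool
  | _, [] => true
  | R, c :: cs => okRule R c && okAll (R ++ [ruleOf c]) cs

/-- The defining relations. -/
def base : Rules := [([true, true, true], []), ([false, false, false], []),
  ([true, false, true, false, true], [false, true, false, true, false])]

/-- The certificates of the completion: two rules, the length of their overlap, the new rule. -/
def certs : List (ℕ × ℕ × ℕ × ℕ × ℕ) :=
  [(2, 2, 3, 169, 202), (3, 2, 4, 458, 43), (3, 1, 1, 586, 105), (1, 4, 1, 229, 172),
   (0, 6, 1, 691, 114), (2, 5, 4, 211, 154), (8, 0, 1, 922, 83), (3, 6, 4, 1866, 173),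
   (1, 5, 1, 293, 420), (0, 11, 1, 1683, 146), (1, 9, 1, 461, 332), (0, 13, 1, 1331, 230),
   (2, 8, 1, 2469, 436), (2, 10, 4, 347, 474), (16, 1, 1, 1242, 219), (6, 2, 1, 3372, 301),
   (7, 1, 1, 435, 306), (13, 19, 6, 1225, 1612), (19, 0, 1, 1842, 179), (16, 6, 4, 2649, 3802),
   (20, 1, 2, 2636, 457), (1, 10, 1, 933, 692), (1, 17, 1, 621, 876), (1, 18, 2, 843, 602),
   (26, 24, 8, 1385, 1626), (1, 21, 1, 921, 716), (28, 19, 6, 3276, 307), (1, 23, 2, 659, 914),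
   (1, 29, 2, 819, 614), (8, 13, 3, 7322, 667), (16, 11, 4, 6985, 5842), (19, 6, 3, 5523, 946),
   (22, 11, 7, 6729, 5850), (25, 8, 4, 4713, 7020), (6, 22, 5, 15209, 11556), (8, 36, 6, 14041, 11410),
   (19, 13, 3, 11417, 14642), (20, 8, 4, 13900, 1241), (1, 32, 1, 3661, 2668), (1, 40, 2, 3475, 2482),
   (41, 42, 9, 9929, 12908), (25, 30, 4, 30281, 23396), (35, 0, 1, 30426, 2633), (36, 30, 7, 29257, 23404),
   (42, 43, 10, 25817, 18866), (30, 44, 8, 46793, 60818), (46, 0, 2, 56172, 4681), (1, 45, 1, 15213, 10532),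
   (1, 49, 2, 14043, 9362), (51, 50, 12, 21065, 25746), (38, 25, 6, 104009, 76946)]

/-- The completed system, without the redundant rules. -/
def full : Rules :=
  [0, 1, 2, 3, 6, 8, 11, 13, 16, 19, 20, 22, 24, 25, 26, 27, 28, 30, 31, 33, 35, 36, 37, 38, 39,
    41, 42, 43, 44, 46, 47, 48, 50, 51, 52, 53].filterMap
    fun i => (base ++ certs.map ruleOf)[i]?

theorem eqW_sound : ∀ {a b : W}, eqW a b = true → a = b
  | [], [], _ => rfl
  | [], _ :: _, h => by simp [eqW] at h
  | _ :: _, [], h => by simp [eqW] at h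
  | a :: l, b :: w, h => by
    cases a <;> cases b <;> simp [eqW] at h <;> rw [eqW_sound h]

theorem strip_sound : ∀ {l w y : W}, strip l w = some y → w = l ++ y
  | [], w, y, h => by
    change some w = some y at h
    simpa using h
  | _ :: _, [], y, h => by
    change none = some y at h
    cases h
  | a :: l, b :: w, y, h => by
    cases a <;> cases b
    · change strip l w = some y at h
      rw [strip_sound h]; rfl
    · change none = some y at h
      cases h
    · change none = some y at h
      cases h
    · change strip l w = some y at h
      rw [strip_sound h]; rfl

section sound
variable {M : Type*} [Monoid M] (g : Bool → M)

/-- Value of a word. -/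
def ev (w : W) : M := (w.map g).prod

theorem ev_append (a b : W) : ev g (a ++ b) = ev g a * ev g b := by simp [ev]

theorem ev_cons (a : Bool) (b : W) : ev g (a :: b) = g a * ev g b := by simp [ev]

/-- All rules hold. -/
def Valid (R : Rules) : Prop := ∀ p ∈ R, ev g p.1 = ev g p.2

variable {g}

theorem findR_sound : ∀ {R : Rules} (_ : Valid g R) {w : W} {p : W × W},
    findR R w = some p → ev g w = ev g p.1 * ev g p.2
  | [], _, _, _, h => by simp [findR] at h
  | r :: R, hR, w, p, h => by
    rw [findR_cons] at h
    split at h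
    · rename_i y hy
      cases h
      rw [strip_sound hy, ev_append, hR r (by simp)]
    · exact findR_sound (fun q hq => hR q (by simp [hq])) h

theorem foldr_sound {f : Bool → W → W} (hf : ∀ a w, ev g (f a w) = g a * ev g w) (y : W) :
    ∀ r : W, ev g (r.foldr f y) = ev g r * ev g y
  | [] => by simp [ev]
  | a :: r => by rw [List.foldr_cons, hf, foldr_sound hf y r, ev_cons, mul_assoc]

theorem push_sound {R : Rules} (hR : Valid g R) : ∀ (n : ℕ) (a : Bool) (w : W),
    ev g (push n R a w) = g a * ev g w
  | 0, a, w => by rw [push, ev_cons]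
  | n + 1, a, w => by
    rw [push]
    split
    · rw [ev_cons]
    · rename_i p hp
      rw [foldr_sound (push_sound hR n), ← findR_sound hR hp, ev_cons]

theorem norm_sound {R : Rules} (hR : Valid g R) (w : W) : ev g (norm R w) = ev g w := by
  rw [norm, foldr_sound (push_sound hR 30)]; simp [ev]

theorem okRule_sound {R : Rules} (hR : Valid g R) {c} (h : okRule R c = true) :
    ev g (ruleOf c).1 = ev g (ruleOf c).2 := by
  unfold okRule at h
  split at h
  · rename_i x y hx hy
    have hx' := hR x (List.mem_of_getElem? hx)
    have hy' := hR y (List.mem_of_getElem? hy)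
    simp only [Bool.and_eq_true, Bool.or_eq_true] at h
    obtain ⟨h1, h2⟩ := h
    have e1 := congrArg (ev g) (eqW_sound h1)
    rw [ev_append, ev_append, hx', hy', ← ev_append, ← ev_append, ← norm_sound hR,
      ← norm_sound hR (x.2 ++ _)] at e1
    rcases h2 with ⟨h2, h3⟩ | ⟨h2, h3⟩
    · rw [eqW_sound h2, eqW_sound h3] at e1
      exact e1.symm
    · rw [eqW_sound h2, eqW_sound h3] at e1
      exact e1
  · cases h

theorem okAll_sound : ∀ (cs) {R : Rules} (_ : Valid g R), okAll R cs = true →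
    Valid g (R ++ cs.map ruleOf)
  | [], R, hR, _ => by simpa using hR
  | c :: cs, R, hR, h => by
    rw [okAll, Bool.and_eq_true] at h
    have : Valid g (R ++ [ruleOf c]) := by
      intro p hp
      rcases List.mem_append.1 hp with hp | hp
      · exact hR p hp
      · rw [List.mem_singleton.1 hp]; exact okRule_sound hR h.1
    have h2 := okAll_sound cs this h.2
    simpa using h2

end sound

set_option maxRecDepth 100000 in
theorem okAll_certs : okAll base certs = true := by decide +kernel

/-- Normal forms of a given length. -/
noncomputable def sphere : ℕ → List W
  | 0 => [[]]
  | n + 1 => (sphere n).flatMap fun w =>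
      [true, false].filterMap fun a => match findR full (a :: w) with
        | none => some (a :: w)
        | some _ => none

/-- All normal forms. -/
noncomputable def nf : List W := (List.range 18).flatMap sphere

/-- Membership test. -/
def memW (w : W) : List W → Bool
  | [] => false
  | u :: l => eqW u w || memW w l

theorem memW_sound {w : W} : ∀ {l : List W}, memW w l = true → w ∈ l
  | [], h => by simp [memW] at h
  | u :: l, h => by
    rw [memW, Bool.or_eq_true] at h
    rcases h with h | h
    · simp [eqW_sound h]
    · exact List.mem_cons_of_mem _ (memW_sound h)

set_option maxRecDepth 100000 in
theorem nf_length : nf.length = 360 := by decide +kernel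

/-- Test that a word is a normal form. -/
noncomputable def isNF (w : W) : Bool := Nat.ble w.length 17 && memW w (sphere w.length)

theorem isNF_sound {w : W} (h : isNF w = true) : w ∈ nf := by
  rw [isNF, Bool.and_eq_true, Nat.ble_eq] at h
  exact List.mem_flatMap.2 ⟨w.length, List.mem_range.2 (by omega), memW_sound h.2⟩

set_option maxRecDepth 100000 in
theorem nf_closed : (nf.all fun w => isNF (push 30 full true w) &&
    isNF (push 30 full false w)) = true := by decide +kernel

/-- The plane. -/
abbrev V := ZMod 19 × ZMod 19

/-- First matrix. -/
def fS (v : V) : V := (7 * v.1, v.2)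

/-- Second matrix. -/
def fT (v : V) : V := (13 * v.1 + v.2, 4 * v.1 + 14 * v.2)

/-- First matrix as a permutation. -/
def pS : Equiv.Perm V := ⟨fS, fun v => fS (fS v), by decide +kernel, by decide +kernel⟩

/-- Second matrix as a permutation. -/
def pT : Equiv.Perm V := ⟨fT, fun v => fT (fT v), by decide +kernel, by decide +kernel⟩

/-- The images of the generators. -/
def gen (b : Bool) : Equiv.Perm V := bif b then pS else pT

theorem gen_rel : ∀ r ∈ relG20, FreeGroup.lift gen r = 1 := by
  have h1 : ∀ v, fS (fS (fS v)) = v := by decide +kernel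
  have h2 : ∀ v, fT (fT (fT v)) = v := by decide +kernel
  have h3 : ∀ v, fS (fT (fS (fT (fS v)))) = fT (fS (fT (fS (fT v)))) := by decide +kernel
  intro r hr
  rcases hr with rfl | rfl | rfl
  · simp only [map_mul, map_inv, FreeGroup.lift_apply_of]
    rw [mul_inv_eq_one]
    exact Equiv.ext h3
  · rw [map_pow, FreeGroup.lift_apply_of, pow_succ, pow_succ, pow_one]
    exact Equiv.ext h1
  · rw [map_pow, FreeGroup.lift_apply_of, pow_succ, pow_succ, pow_one]
    exact Equiv.ext h2

/-- The representation. -/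
noncomputable def rep : G20 →* Equiv.Perm V := PresentedGroup.toGroup gen_rel

/-- Generators of the group. -/
def gG (b : Bool) : G20 := PresentedGroup.of b

/-- Action of a word, with coordinates as natural numbers. -/
def actW (w : W) (v : ℕ × ℕ) : ℕ × ℕ :=
  w.foldr (fun b v => bif b then ((7 * v.1) % 19, v.2)
    else ((13 * v.1 + v.2) % 19, (4 * v.1 + 14 * v.2) % 19)) v

/-- Cast of natural coordinates. -/
def castV (v : ℕ × ℕ) : V := (v.1, v.2)

theorem rep_ev (v : ℕ × ℕ) : ∀ w : W, rep (ev gG w) (castV v) = castV (actW w v)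
  | [] => by simp [ev, actW]
  | a :: w => by
    have h : rep (gG a) = gen a := PresentedGroup.toGroup.of gen_rel
    rw [ev_cons, map_mul, Equiv.Perm.mul_apply, rep_ev v w, h]
    change _ = castV (bif a then ((7 * (actW w v).1) % 19, (actW w v).2)
      else ((13 * (actW w v).1 + (actW w v).2) % 19, (4 * (actW w v).1 + 14 * (actW w v).2) % 19))
    cases a
    · change fT (castV _) = _
      simp [fT, castV]
    · change fS (castV _) = _
      simp [fS, castV]

/-- A number from the matrix of a word. -/
def code (w : W) : ℕ :=
  let a := actW w (1, 0)
  let b := actW w (0, 1)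
  a.1 + 19 * (a.2 + 19 * (b.1 + 19 * b.2))

theorem actW_lt (w : W) (v : ℕ × ℕ) (hv : v.1 < 19 ∧ v.2 < 19) :
    (actW w v).1 < 19 ∧ (actW w v).2 < 19 := by
  induction w with
  | nil => exact hv
  | cons a w ih =>
    cases a
    · exact ⟨Nat.mod_lt _ (by norm_num), Nat.mod_lt _ (by norm_num)⟩
    · exact ⟨Nat.mod_lt _ (by norm_num), ih.2⟩

theorem castV_inj {u v : ℕ × ℕ} (hu : u.1 < 19 ∧ u.2 < 19) (hv : v.1 < 19 ∧ v.2 < 19)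
    (h : castV u = castV v) : u = v := by
  simp only [castV, Prod.mk.injEq, ZMod.natCast_eq_natCast_iff'] at h
  rw [Nat.mod_eq_of_lt hu.1, Nat.mod_eq_of_lt hu.2, Nat.mod_eq_of_lt hv.1,
    Nat.mod_eq_of_lt hv.2] at h
  exact Prod.ext h.1 h.2

theorem code_eq {u w : W} (h : ev gG u = ev gG w) : code u = code w := by
  have key : ∀ v : ℕ × ℕ, v.1 < 19 ∧ v.2 < 19 → actW u v = actW w v := by
    intro v hv
    apply castV_inj (actW_lt u v hv) (actW_lt w v hv)
    rw [← rep_ev, ← rep_ev, h]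
  simp only [code]
  rw [key (1, 0) (by norm_num), key (0, 1) (by norm_num)]

/-- Test that a list of numbers has no repetition. -/
def distinct : List ℕ → Bool
  | [] => true
  | a :: l => l.all (fun b => !(Nat.beq a b)) && distinct l

theorem distinct_sound : ∀ {l : List ℕ}, distinct l = true → l.Nodup
  | [], _ => List.nodup_nil
  | a :: l, h => by
    rw [distinct, Bool.and_eq_true, List.all_eq_true] at h
    refine List.nodup_cons.2 ⟨fun ha => ?_, distinct_sound h.2⟩
    simpa using h.1 a ha

set_option maxRecDepth 100000 in
theorem nf_distinct : distinct (nf.map code) = true := by decide +kernel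

theorem rel_eq_one {r : FreeGroup Bool} (h : r ∈ relG20) : PresentedGroup.mk relG20 r = 1 :=
  PresentedGroup.one_of_mem h

theorem base_valid : Valid gG base := by
  have h1 := rel_eq_one (r := _) (Or.inl rfl)
  have h2 := rel_eq_one (r := _) (Or.inr (Or.inl rfl))
  have h3 := rel_eq_one (r := _) (Or.inr (Or.inr rfl))
  rw [map_mul, map_inv, mul_inv_eq_one] at h1
  simp only [map_mul, pow_succ, pow_zero, one_mul] at h1 h2 h3
  intro p hp
  simp only [base, List.mem_cons, List.not_mem_nil, or_false] at hp
  rcases hp with rfl | rfl | rfl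
  · simpa [ev, mul_assoc, gG, PresentedGroup.of] using h2
  · simpa [ev, mul_assoc, gG, PresentedGroup.of] using h3
  · simpa [ev, mul_assoc, gG, PresentedGroup.of] using h1

theorem full_valid : Valid gG full := by
  intro p hp
  obtain ⟨i, -, hi⟩ := List.mem_filterMap.1 hp
  exact okAll_sound certs base_valid okAll_certs p (List.mem_of_getElem? hi)

theorem gG_cube (b : Bool) : (gG b)⁻¹ = gG b * gG b := by
  rw [inv_eq_iff_mul_eq_one]
  cases b
  · simpa [ev] using base_valid ([false, false, false], []) (by simp [base])
  · simpa [ev] using base_valid ([true, true, true], []) (by simp [base])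

theorem cover_mul (b : Bool) (x : G20) (hx : ∃ w ∈ nf, ev gG w = x) :
    ∃ w ∈ nf, ev gG w = gG b * x := by
  obtain ⟨w, hw, rfl⟩ := hx
  have h := List.all_eq_true.1 nf_closed w hw
  rw [Bool.and_eq_true] at h
  refine ⟨push 30 full b w, ?_, push_sound full_valid 30 b w⟩
  cases b
  · exact isNF_sound h.2
  · exact isNF_sound h.1

theorem cover (x : G20) : ∃ w ∈ nf, ev gG w = x := by
  have hx : x ∈ Subgroup.closure (Set.range (PresentedGroup.of (rels := relG20))) := by
    rw [PresentedGroup.closure_range_of]; trivial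
  induction hx using Subgroup.closure_induction_left with
  | one => exact ⟨[], List.mem_flatMap.2 ⟨0, by simp, by simp [sphere]⟩, by simp [ev]⟩
  | mul_left x hx y hy ih =>
    obtain ⟨b, rfl⟩ := hx
    exact cover_mul b y ih
  | inv_mul_cancel x hx y hy ih =>
    obtain ⟨b, rfl⟩ := hx
    change ∃ w ∈ nf, ev gG w = (gG b)⁻¹ * y
    rw [gG_cube, mul_assoc]
    exact cover_mul b _ (cover_mul b y ih)

theorem bij : Function.Bijective (fun i : Fin nf.length => ev gG nf[i]) := by
  constructor
  · intro i j h
    have h1 : code nf[i] = code nf[j] := code_eq h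
    have hn := distinct_sound nf_distinct
    apply Fin.ext
    have hi : (i : ℕ) < (nf.map code).length := by simp
    have hj : (j : ℕ) < (nf.map code).length := by simp
    refine (hn.getElem_inj_iff (hi := hi) (hj := hj)).1 ?_
    simpa using h1
  · intro x
    obtain ⟨w, hw, rfl⟩ := cover x
    obtain ⟨i, hi, rfl⟩ := List.mem_iff_getElem.1 hw
    exact ⟨⟨i, hi⟩, rfl⟩

end G20Proof

/-- The group `⟨s, t | s t s t s = t s t s t, s³ = t³ = 1⟩` (i.e. `G₂₀`)
is a finite group of order 360. -/
theorem stmt6 : Finite G20 ∧ Nat.card G20 = 360 := by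
  refine ⟨Finite.of_surjective _ G20Proof.bij.2, ?_⟩
  rw [← Nat.card_eq_of_bijective _ G20Proof.bij, Nat.card_fin, G20Proof.nf_length]
end

section
/- The group ⟨u, v | (u v)^5 = (v u)^5, u^2 = 1, v^3 = 1⟩ is a finite group of order 720. -/
/-- Relators of the complex reflection group
`G₂₁ = ⟨u, v | (u v)^5 = (v u)^5, u² = 1, v³ = 1⟩`, with `true ↦ u`, `false ↦ v`. -/
def relG21 : Set (FreeGroup Bool) :=
  {(FreeGroup.of true * FreeGroup.of false) ^ 5 *
     ((FreeGroup.of false * FreeGroup.of true) ^ 5)⁻¹,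
   FreeGroup.of true ^ 2, FreeGroup.of false ^ 3}

/-- The group `G₂₁`. -/
abbrev G21 := PresentedGroup relG21

/-- Representatives of the twelve cosets of `⟨t⟩` in the icosahedral group. -/
def cosetRep {Q : Type*} [Group Q] (u t : Q) : Fin 12 → Q :=
  ![1, u, t * u, t ^ 2 * u, t ^ 3 * u, t ^ 4 * u,
    u * t ^ 2 * u, t * (u * t ^ 2 * u), t ^ 2 * (u * t ^ 2 * u), t ^ 3 * (u * t ^ 2 * u),
    t ^ 4 * (u * t ^ 2 * u), u * t ^ 2 * u * t ^ 3 * u]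

/-- A group generated by `u, t` with `u² = t⁵ = (ut)³ = 1` has at most 60 elements. -/
lemma card_le_sixty {Q : Type*} [Group Q] (u t : Q) (hu : u * u = 1) (ht : t ^ 5 = 1)
    (hut : (u * t) ^ 3 = 1) (hgen : Subgroup.closure {u, t} = ⊤) :
    Finite Q ∧ Nat.card Q ≤ 60 := by
  have hu' : u⁻¹ = u := inv_eq_of_mul_eq_one_left hu
  have ht' : t⁻¹ = t ^ 4 := inv_eq_of_mul_eq_one_left (by rw [← pow_succ, ht])
  have uu : ∀ x, u * (u * x) = x := fun x => by rw [← mul_assoc, hu, one_mul]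
  have t5 : ∀ x, t * (t * (t * (t * (t * x)))) = x := fun x => by
    have : t * (t * (t * (t * (t * x)))) = t ^ 5 * x := by simp only [pow_succ, pow_zero, one_mul, mul_assoc]
    rw [this, ht, one_mul]
  have t5' : t * (t * (t * (t * t))) = 1 := by simpa using t5 1
  have e1 : u * t * u = t ^ 4 * u * t ^ 4 := by
    have h : (u * t * u) * (t * u * t) = 1 := by
      rw [← hut]; simp only [pow_succ, pow_zero, one_mul, mul_assoc]
    rw [eq_inv_of_mul_eq_one_left h]
    simp only [mul_inv_rev, hu', ht', mul_assoc]
  have e4 : u * t ^ 4 * u = t * u * t := by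
    have := congrArg (·⁻¹) e1
    simp only [mul_inv_rev, hu', ht', ← inv_pow, mul_assoc, ← pow_mul] at this
    rw [mul_assoc, this]
    have : t ^ (4 * 4) = t := by
      rw [show 4 * 4 = 5 * 3 + 1 from rfl, pow_add, pow_mul, ht]; simp
    rw [this, mul_assoc]
  have e3 : u * t ^ 3 * u = t * u * t ^ 2 * u * t := by
    have : u * t ^ 3 * u = (u * t ^ 4 * u) * (u * t ^ 4 * u) := by
      simp only [pow_succ, pow_zero, one_mul, mul_assoc, uu, t5]
    rw [this, e4]; simp only [pow_succ, pow_zero, one_mul, mul_assoc]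
  have r1 : ∀ x, u * (t * (u * x)) = t * (t * (t * (t * (u * (t * (t * (t * (t * x)))))))) := by
    intro x
    have := congrArg (· * x) e1
    simpa only [pow_succ, pow_zero, one_mul, mul_assoc] using this
  have r4 : ∀ x, u * (t * (t * (t * (t * (u * x))))) = t * (u * (t * x)) := by
    intro x
    have := congrArg (· * x) e4
    simpa only [pow_succ, pow_zero, one_mul, mul_assoc] using this
  have r3 : ∀ x, u * (t * (t * (t * (u * x)))) = t * (u * (t * (t * (u * (t * x))))) := by
    intro x
    have := congrArg (· * x) e3
    simpa only [pow_succ, pow_zero, one_mul, mul_assoc] using this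
  have r1' := r1 1
  have r3' := r3 1
  have r4' := r4 1
  simp only [mul_one] at r1' r3' r4'
  have hX : ∀ x, u * (t * (t * (u * (t * (t * (t * (u * x))))))) =
      t * (u * (t * (t * (u * (t * (t * (t * (u * (t * x))))))))) := by
    intro x
    conv_lhs => rw [r3, r3]
  have hX1 := hX 1
  simp only [mul_one] at hX1
  -- left multiplication by `u`
  have hU : ∀ i, ∃ j, ∃ k : ℕ, u * cosetRep u t i = cosetRep u t j * t ^ k := by
    intro i
    fin_cases i
    · exact ⟨1, 0, by simp [cosetRep]⟩
    · exact ⟨0, 0, by simp [cosetRep, hu]⟩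
    · refine ⟨5, 4, ?_⟩
      simp [cosetRep, pow_succ, mul_assoc, r1']
    · refine ⟨6, 0, ?_⟩
      simp [cosetRep, pow_succ, mul_assoc]
    · refine ⟨7, 1, ?_⟩
      simp [cosetRep, pow_succ, mul_assoc, r3']
    · refine ⟨2, 1, ?_⟩
      simp [cosetRep, pow_succ, mul_assoc, r4']
    · refine ⟨3, 0, ?_⟩
      simp [cosetRep, pow_succ, mul_assoc, uu]
    · refine ⟨4, 4, ?_⟩
      simp [cosetRep, pow_succ, mul_assoc, r1, r1', t5]
    · refine ⟨10, 4, ?_⟩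
      have h := r4 (t * (t * u))
      rw [r3'] at h
      simp only [cosetRep, pow_succ, pow_zero, one_mul, mul_assoc]
      apply mul_left_cancel (a := u)
      simp [uu, mul_assoc, r4, r3, t5']
    · refine ⟨11, 4, ?_⟩
      change u * (t ^ 3 * (u * t ^ 2 * u)) = u * t ^ 2 * u * t ^ 3 * u * t ^ 4
      simp only [pow_succ, pow_zero, one_mul, mul_assoc]
      rw [r3, hX (t * (t * (t * t))), t5', mul_one]
    · refine ⟨8, 1, ?_⟩
      simp [cosetRep, pow_succ, mul_assoc, r4, r3']
    · refine ⟨9, 1, ?_⟩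
      simp [cosetRep, pow_succ, mul_assoc, uu, r3']
  have hT : ∀ i, ∃ j, ∃ k : ℕ, t * cosetRep u t i = cosetRep u t j * t ^ k := by
    intro i
    fin_cases i
    · exact ⟨0, 1, by simp [cosetRep]⟩
    · exact ⟨2, 0, by simp [cosetRep]⟩
    · exact ⟨3, 0, by simp [cosetRep, pow_succ, mul_assoc]⟩
    · exact ⟨4, 0, by simp [cosetRep, pow_succ, mul_assoc]⟩
    · exact ⟨5, 0, by simp [cosetRep, pow_succ, mul_assoc]⟩
    · exact ⟨1, 0, by simp [cosetRep, pow_succ, mul_assoc, t5]⟩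
    · exact ⟨7, 0, by simp [cosetRep, pow_succ, mul_assoc]⟩
    · exact ⟨8, 0, by simp [cosetRep, pow_succ, mul_assoc]⟩
    · exact ⟨9, 0, by simp [cosetRep, pow_succ, mul_assoc]⟩
    · exact ⟨10, 0, by simp [cosetRep, pow_succ, mul_assoc]⟩
    · exact ⟨6, 0, by simp [cosetRep, pow_succ, mul_assoc, t5]⟩
    · refine ⟨11, 4, ?_⟩
      simp [cosetRep, pow_succ, mul_assoc]
      rw [hX (t * (t * (t * t))), t5', mul_one]
  have key : ∀ q : Q, ∃ i, ∃ k : ℕ, q = cosetRep u t i * t ^ k := by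
    have hU' : ∀ x : Q, (∃ i, ∃ k : ℕ, x = cosetRep u t i * t ^ k) →
        ∃ i, ∃ k : ℕ, u * x = cosetRep u t i * t ^ k := by
      rintro x ⟨i, k, rfl⟩
      obtain ⟨j, l, h⟩ := hU i
      exact ⟨j, l + k, by rw [← mul_assoc, h, mul_assoc, pow_add]⟩
    have hT' : ∀ x : Q, (∃ i, ∃ k : ℕ, x = cosetRep u t i * t ^ k) →
        ∃ i, ∃ k : ℕ, t * x = cosetRep u t i * t ^ k := by
      rintro x ⟨i, k, rfl⟩
      obtain ⟨j, l, h⟩ := hT i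
      exact ⟨j, l + k, by rw [← mul_assoc, h, mul_assoc, pow_add]⟩
    intro q
    have hq : q ∈ Subgroup.closure {u, t} := by rw [hgen]; trivial
    induction hq using Subgroup.closure_induction_left with
    | one => exact ⟨0, 0, by simp [cosetRep]⟩
    | mul_left x hx y hy ih =>
      rcases hx with rfl | rfl
      · exact hU' _ ih
      · exact hT' _ ih
    | inv_mul_cancel x hx y hy ih =>
      rcases hx with rfl | rfl
      · rw [hu']; exact hU' _ ih
      · rw [ht']
        simp only [pow_succ, pow_zero, one_mul, mul_assoc]
        exact hT' _ (hT' _ (hT' _ (hT' _ ih)))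
  have hs : Function.Surjective (fun p : Fin 12 × Fin 5 => cosetRep u t p.1 * t ^ (p.2 : ℕ)) := by
    intro q
    obtain ⟨i, k, rfl⟩ := key q
    refine ⟨(i, ⟨k % 5, Nat.mod_lt _ (by norm_num)⟩), ?_⟩
    simp only
    rw [← pow_eq_pow_mod k ht]
  refine ⟨Finite.of_surjective _ hs, ?_⟩
  simpa using Nat.card_le_card_of_surjective _ hs

lemma cosetRep_map {Q R : Type*} [Group Q] [Group R] (f : Q →* R) (u t : Q) (i : Fin 12) :
    f (cosetRep u t i) = cosetRep (f u) (f t) i := by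
  fin_cases i <;> simp [cosetRep]

/-- The universal property of `G21`. -/
lemma G21_lift {R : Type*} [Group R] (u v : R) (h : (u * v) ^ 5 = (v * u) ^ 5) (hu : u ^ 2 = 1)
    (hv : v ^ 3 = 1) :
    ∃ f : G21 →* R, f (PresentedGroup.of true) = u ∧ f (PresentedGroup.of false) = v := by
  have H : ∀ r ∈ relG21, FreeGroup.lift (fun b : Bool => if b then u else v) r = 1 := by
    rintro r (rfl | rfl | rfl)
    · simp [h]
    · simp [hu]
    · simp [hv]
  exact ⟨PresentedGroup.toGroup H, by simp, by simp⟩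

/-- Image of `u` in `A₅`. -/
def permU : Equiv.Perm (Fin 5) := Equiv.swap 0 1 * Equiv.swap 2 3

/-- Image of `v` in `A₅`. -/
def permV : Equiv.Perm (Fin 5) := Equiv.swap 1 2 * Equiv.swap 2 4

lemma perm_injective : Function.Injective (fun p : Fin 12 × Fin 5 =>
    cosetRep permU (permU * permV) p.1 * (permU * permV) ^ (p.2 : ℕ)) := by
  decide +kernel

/-- Image of `u` in `GL₂(𝔽₆₁)`. -/
def matU : (Matrix (Fin 2) (Fin 2) (ZMod 61))ˣ :=
  ⟨!![1, 0; 0, 60], !![1, 0; 0, 60], by decide +kernel, by decide +kernel⟩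

/-- Image of `v` in `GL₂(𝔽₆₁)`. -/
def matV : (Matrix (Fin 2) (Fin 2) (ZMod 61))ˣ :=
  ⟨!![24, 1; 52, 51], !![18, 14; 57, 30], by decide +kernel, by decide +kernel⟩

/-- The group `⟨u, v | (u v)^5 = (v u)^5, u² = 1, v³ = 1⟩` (i.e. `G₂₁`)
is a finite group of order 720. -/
theorem stmt7 : Finite G21 ∧ Nat.card G21 = 720 := by
  set u : G21 := PresentedGroup.of true with hud
  set v : G21 := PresentedGroup.of false with hvd
  have hu : u ^ 2 = 1 :=
    PresentedGroup.one_of_mem (rels := relG21) (x := FreeGroup.of true ^ 2) (by simp [relG21])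
  have hv : v ^ 3 = 1 :=
    PresentedGroup.one_of_mem (rels := relG21) (x := FreeGroup.of false ^ 3) (by simp [relG21])
  have huv : (u * v) ^ 5 = (v * u) ^ 5 :=
    mul_inv_eq_one.1 (PresentedGroup.one_of_mem (rels := relG21)
      (x := (FreeGroup.of true * FreeGroup.of false) ^ 5 *
        ((FreeGroup.of false * FreeGroup.of true) ^ 5)⁻¹) (by simp [relG21]))
  have huu : u * u = 1 := by rw [← hu, pow_two]
  have hgen : ∀ H : Subgroup G21, u ∈ H → v ∈ H → H = ⊤ := by
    intro H h1 h2
    rw [eq_top_iff]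
    intro x _
    exact PresentedGroup.generated_by relG21 H (by rintro (_ | _); exacts [h2, h1]) x
  obtain ⟨z, hz⟩ : ∃ z, z = (u * v) ^ 5 := ⟨_, rfl⟩
  -- `z` is central
  have hzc : z ∈ Subgroup.center G21 := by
    have h1 : u * z = z * u := by
      conv_lhs => rw [hz, huv]
      rw [hz]
      simp only [pow_succ, pow_zero, one_mul, mul_assoc]
    have h2 : v * z = z * v := by
      conv_rhs => rw [hz, huv]
      rw [hz]
      simp only [pow_succ, pow_zero, one_mul, mul_assoc]
    have := hgen (Subgroup.centralizer {z})
      (Subgroup.mem_centralizer_singleton_iff.2 h1) (Subgroup.mem_centralizer_singleton_iff.2 h2)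
    rw [Subgroup.mem_center_iff]
    intro g
    have hg : g ∈ Subgroup.centralizer {z} := by rw [this]; trivial
    exact Subgroup.mem_centralizer_singleton_iff.1 hg
  set K : Subgroup G21 := Subgroup.zpowers z with hK
  have hKc : K ≤ Subgroup.center G21 := by rwa [hK, Subgroup.zpowers_le]
  have : K.Normal := ⟨fun n hn g => by
    rw [Subgroup.mem_center_iff.1 (hKc hn) g, mul_inv_cancel_right]; exact hn⟩
  -- the index of `K`
  let π := QuotientGroup.mk' K
  have hπt : (π (u * v)) ^ 5 = 1 := by
    rw [← map_pow, ← hz]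
    exact (QuotientGroup.eq_one_iff z).2 (Subgroup.mem_zpowers z)
  have hv' : u * (u * v) = v := by rw [← mul_assoc, huu, one_mul]
  obtain ⟨hfin, hle⟩ := card_le_sixty (π u) (π (u * v)) (by rw [← map_mul, huu, map_one]) hπt
    (by rw [← map_mul, hv', ← map_pow, hv, map_one]) (by
      have h := hgen (Subgroup.closure {u, u * v}) (Subgroup.subset_closure (by simp)) (by
        have h3 : u * (u * v) ∈ Subgroup.closure {u, u * v} :=
          mul_mem (Subgroup.subset_closure (by simp)) (Subgroup.subset_closure (by simp))
        rwa [hv'] at h3)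
      have h2 := MonoidHom.map_closure π {u, u * v}
      rw [h, Set.image_pair] at h2
      rw [← h2]
      exact Subgroup.map_top_of_surjective _ (QuotientGroup.mk'_surjective K))
  have hge : 60 ≤ Nat.card (G21 ⧸ K) := by
    obtain ⟨f, fu, fv⟩ := G21_lift permU permV (by decide +kernel) (by decide +kernel)
      (by decide +kernel)
    have hfK : K ≤ f.ker := by
      rw [hK, Subgroup.zpowers_le, MonoidHom.mem_ker, hz, map_pow, map_mul, fu, fv]
      decide +kernel
    let F := QuotientGroup.lift K f hfK
    have hi : Function.Injective (fun p : Fin 12 × Fin 5 =>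
        cosetRep (π u) (π (u * v)) p.1 * (π (u * v)) ^ (p.2 : ℕ)) := by
      apply Function.Injective.of_comp (f := F)
      convert perm_injective using 1
      funext p
      have e1 : F (π u) = permU := fu
      have e2 : F (π (u * v)) = permU * permV := by
        change f (u * v) = _
        rw [map_mul, fu, fv]
      simp only [Function.comp]
      rw [map_mul, map_pow, cosetRep_map, e1, e2]
    simpa using Nat.card_le_card_of_injective _ hi
  have hidx : K.index = 60 := le_antisymm hle hge
  -- transfer into the centre shows that `g ^ 60 = 1` for all `g`
  have hdvd : (Subgroup.center G21).index ∣ 60 := hidx ▸ Subgroup.index_dvd_of_le hKc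
  have : (Subgroup.center G21).FiniteIndex :=
    ⟨fun h => by rw [h] at hdvd; norm_num at hdvd⟩
  obtain ⟨m, hm⟩ := hdvd
  have hpow : ∀ g : G21, ((MonoidHom.transferCenterPow G21 g) ^ m : Subgroup.center G21) =
      (g ^ 60 : G21) := by
    intro g
    rw [Subgroup.coe_pow, MonoidHom.transferCenterPow_apply, ← pow_mul, ← hm]
  have hz12 : z ^ 12 = 1 := by
    have h1 : (u * v) ^ 60 = u ^ 60 * v ^ 60 := by
      have hc : Commute (MonoidHom.transferCenterPow G21 u) (MonoidHom.transferCenterPow G21 v) :=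
        Subtype.ext (Subgroup.mem_center_iff.1 (MonoidHom.transferCenterPow G21 v).2 _)
      rw [← hpow, ← hpow, ← hpow, map_mul, hc.mul_pow, Subgroup.coe_mul]
    rw [hz, ← pow_mul, h1, show 60 = 2 * 30 from rfl, pow_mul, hu, one_pow, one_mul,
      show 2 * 30 = 3 * 20 from rfl, pow_mul, hv, one_pow]
  have hord : orderOf z = 12 := by
    obtain ⟨f, fu, fv⟩ := G21_lift matU matV (Units.ext (by decide +kernel))
      (Units.ext (by decide +kernel)) (Units.ext (by decide +kernel))
    have hfz : f z = (matU * matV) ^ 5 := by rw [hz, map_pow, map_mul, fu, fv]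
    refine orderOf_eq_of_pow_and_pow_div_prime (by norm_num) hz12 ?_
    intro p hp hpd h
    have hp' : p = 2 ∨ p = 3 := by
      rw [show 12 = 2 ^ 2 * 3 from rfl, hp.dvd_mul] at hpd
      rcases hpd with h | h
      · exact Or.inl ((Nat.prime_dvd_prime_iff_eq hp Nat.prime_two).1 (hp.dvd_of_dvd_pow h))
      · exact Or.inr ((Nat.prime_dvd_prime_iff_eq hp Nat.prime_three).1 h)
    have h' := congrArg f h
    rw [map_pow, hfz, map_one, Units.ext_iff] at h'
    rcases hp' with rfl | rfl
    · revert h'; decide +kernel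
    · revert h'; decide +kernel
  have hcard : Nat.card G21 = 720 := by
    rw [← Subgroup.card_mul_index K, hidx, hK, Nat.card_zpowers, hord]
  exact ⟨Nat.finite_of_card_ne_zero (by rw [hcard]; norm_num), hcard⟩
end
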